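/- If W ∈ 𝒲 is finitely forcible in 𝒲, then for every λ, μ ∈ ℝ the function λW + μ is finitely forcible in 𝒲. -/

import Mathlib

open MeasureTheory
open scoped Classical

noncomputable section

/-- The unit interval `[0,1]` as a subset of `ℝ`. -/
def I01 : Set ℝ := Set.Icc 0 1

/-- The cube `[0,1]^n`. -/
def cube (n : ℕ) : Set (Fin n → ℝ) := Set.univ.pi fun _ => I01

/-- `W` belongs to `𝒲`: a bounded symmetric measurable function on `[0,1]²`. -/
def memW (W : ℝ → ℝ → ℝ) : Prop :=
  Measurable (Function.uncurry W) ∧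
  (∀ x ∈ I01, ∀ y ∈ I01, W x y = W y x) ∧
  ∃ C : ℝ, ∀ x ∈ I01, ∀ y ∈ I01, |W x y| ≤ C

/-- `W` belongs to `𝒲₀`: a graphon, i.e. symmetric measurable with values in `[0,1]`. -/
def memW0 (W : ℝ → ℝ → ℝ) : Prop :=
  Measurable (Function.uncurry W) ∧
  (∀ x ∈ I01, ∀ y ∈ I01, W x y = W y x) ∧
  ∀ x ∈ I01, ∀ y ∈ I01, W x y ∈ Set.Icc (0 : ℝ) 1

/-- Homomorphism density `t(F,W)` of a finite simple graph `F` in `W`. -/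
def homDensity {n : ℕ} (F : SimpleGraph (Fin n)) (W : ℝ → ℝ → ℝ) : ℝ :=
  ∫ x in cube n,
    ∏ p ∈ Finset.univ.filter (fun p : Fin n × Fin n => p.1 < p.2 ∧ F.Adj p.1 p.2),
      W (x p.1) (x p.2)

/-- Two kernels are weakly isomorphic if all their homomorphism densities agree. -/
def WeaklyIsomorphic (U W : ℝ → ℝ → ℝ) : Prop :=
  ∀ (n : ℕ) (F : SimpleGraph (Fin n)), homDensity F U = homDensity F W

/-- `W` is finitely forcible within the class `A`. -/
def FinitelyForcible (A : (ℝ → ℝ → ℝ) → Prop) (W : ℝ → ℝ → ℝ) : Prop :=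
  A W ∧ ∃ (k : ℕ) (n : Fin k → ℕ) (F : ∀ i, SimpleGraph (Fin (n i))),
    ∀ U, A U → (∀ i, homDensity (F i) U = homDensity (F i) W) → WeaklyIsomorphic U W

/-- Density function `t^k(F,W)` of a `k`-labeled graph, as a function of the
labeled variables; the graph has `k` labeled and `m` unlabeled vertices. -/
def labDensity {k m : ℕ} (F : SimpleGraph (Fin (k + m))) (W : ℝ → ℝ → ℝ)
    (x : Fin k → ℝ) : ℝ :=
  ∫ y in cube m,
    ∏ p ∈ Finset.univ.filter
        (fun p : Fin (k + m) × Fin (k + m) => p.1 < p.2 ∧ F.Adj p.1 p.2),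
      W (Fin.append x y p.1) (Fin.append x y p.2)

/-- Lebesgue measure on the unit interval. -/
def nuI : Measure ℝ := volume.restrict I01

instance nuI_prob : IsProbabilityMeasure nuI := by
  constructor
  simp [nuI, I01]

lemma cube_measure (n : ℕ) :
    (volume : Measure (Fin n → ℝ)).restrict (cube n) = Measure.pi (fun _ => nuI) := by
  rw [cube, volume_pi, Measure.restrict_pi_pi]
  rfl

lemma cube_meas (n : ℕ) : MeasurableSet (cube n) :=
  MeasurableSet.univ_pi fun _ => measurableSet_Icc

lemma memW_affine {W : ℝ → ℝ → ℝ} (h : memW W) (a b : ℝ) :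
    memW (fun x y => a * W x y + b) := by
  obtain ⟨h1, h2, C, hC⟩ := h
  refine ⟨?_, ?_, |a| * C + |b|, ?_⟩
  · exact (h1.const_mul a).add_const b
  · intro x hx y hy
    simp only [h2 x hx y hy]
  · intro x hx y hy
    calc |a * W x y + b| ≤ |a * W x y| + |b| := abs_add_le _ _
      _ ≤ |a| * C + |b| := by
        rw [abs_mul]
        have := hC x hx y hy
        gcongr

/-- Edge set as ordered pairs. -/
def edg {n : ℕ} (F : SimpleGraph (Fin n)) : Finset (Fin n × Fin n) :=
  Finset.univ.filter (fun p : Fin n × Fin n => p.1 < p.2 ∧ F.Adj p.1 p.2)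

lemma homDensity_eq {n : ℕ} (F : SimpleGraph (Fin n)) (W : ℝ → ℝ → ℝ) :
    homDensity F W = ∫ x in cube n, ∏ p ∈ edg F, W (x p.1) (x p.2) := rfl

lemma exists_graph {n : ℕ} (F : SimpleGraph (Fin n)) (S : Finset (Fin n × Fin n))
    (hS : S ⊆ edg F) : ∃ G : SimpleGraph (Fin n), edg G = S := by
  have hlt : ∀ p ∈ S, p.1 < p.2 := fun p hp => by
    have := hS hp
    simp only [edg, Finset.mem_filter] at this
    exact this.2.1
  refine ⟨⟨fun a b => (a, b) ∈ S ∨ (b, a) ∈ S, ?_, ?_⟩, ?_⟩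
  · constructor
    intro a b hab
    exact hab.symm
  · constructor
    intro a ha
    have : (a, a) ∈ S := by tauto
    exact lt_irrefl _ (hlt _ this)
  · ext ⟨a, b⟩
    simp only [edg, Finset.mem_filter, Finset.mem_univ, true_and]
    constructor
    · rintro ⟨h1, h2 | h2⟩
      · exact h2
      · exact absurd (hlt _ h2) (not_lt.mpr h1.le)
    · intro h
      exact ⟨hlt _ h, Or.inl h⟩

lemma prod_integrable {n : ℕ} {W : ℝ → ℝ → ℝ} (h : memW W) (S : Finset (Fin n × Fin n)) :
    IntegrableOn (fun x : Fin n → ℝ => ∏ p ∈ S, W (x p.1) (x p.2)) (cube n) := by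
  obtain ⟨h1, h2, C, hC⟩ := h
  have hm : Measurable (fun x : Fin n → ℝ => ∏ p ∈ S, W (x p.1) (x p.2)) := by
    refine Finset.measurable_prod _ fun p _ => ?_
    have h3 : Measurable (fun x : Fin n → ℝ => (x p.1, x p.2)) :=
      (measurable_pi_apply p.1).prodMk (measurable_pi_apply p.2)
    exact h1.comp h3
  have hfin : IsFiniteMeasure ((volume : Measure (Fin n → ℝ)).restrict (cube n)) := by
    rw [cube_measure]; infer_instance
  refine Integrable.of_bound hm.aestronglyMeasurable (C ^ S.card) ?_
  rw [ae_restrict_iff' (cube_meas n)]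
  refine Filter.Eventually.of_forall fun x hx => ?_
  rw [Real.norm_eq_abs, Finset.abs_prod]
  rw [← Finset.prod_const]
  refine Finset.prod_le_prod ?_ ?_ <;> intro p _
  · exact abs_nonneg _
  · exact hC _ (hx _ trivial) _ (hx _ trivial)

lemma homDensity_affine {n : ℕ} {W : ℝ → ℝ → ℝ} (h : memW W) (a b : ℝ)
    (F : SimpleGraph (Fin n)) :
    homDensity F (fun x y => a * W x y + b) =
      ∑ S ∈ (edg F).powerset, (a ^ S.card * b ^ (edg F \ S).card) *
        ∫ x in cube n, ∏ p ∈ S, W (x p.1) (x p.2) := by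
  rw [homDensity_eq]
  simp only [Finset.prod_add, Finset.prod_mul_distrib, Finset.prod_const]
  rw [integral_finsetSum]
  · refine Finset.sum_congr rfl fun S _ => ?_
    rw [← integral_const_mul]
    congr 1
    ext x
    ring
  · intro S _
    exact ((prod_integrable h S).const_mul _).mul_const _

lemma homDensity_affine_congr {n : ℕ} {U W : ℝ → ℝ → ℝ} (hU : memW U) (hW : memW W) (a b : ℝ)
    (h : ∀ F : SimpleGraph (Fin n), homDensity F U = homDensity F W)
    (F : SimpleGraph (Fin n)) :
    homDensity F (fun x y => a * U x y + b) = homDensity F (fun x y => a * W x y + b) := by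
  rw [homDensity_affine hU, homDensity_affine hW]
  refine Finset.sum_congr rfl fun S hS => ?_
  obtain ⟨G, rfl⟩ := exists_graph F S (Finset.mem_powerset.mp hS)
  rw [← homDensity_eq, ← homDensity_eq, h]

/-- Forcing by all graphs on given vertex sets. -/
lemma forcible_of_all {W : ℝ → ℝ → ℝ} (hW : memW W) (k : ℕ) (n : Fin k → ℕ)
    (h : ∀ U, memW U → (∀ i, ∀ F : SimpleGraph (Fin (n i)), homDensity F U = homDensity F W) →
      WeaklyIsomorphic U W) : FinitelyForcible memW W := by
  obtain ⟨m, ⟨e⟩⟩ := Finite.exists_equiv_fin ((i : Fin k) × SimpleGraph (Fin (n i)))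
  refine ⟨hW, m, fun j => n (e.symm j).1, fun j => (e.symm j).2, fun U hU hd => ?_⟩
  refine h U hU fun i F => ?_
  have key : ∀ q : (i : Fin k) × SimpleGraph (Fin (n i)),
      homDensity q.2 U = homDensity q.2 W := by
    intro q
    obtain ⟨j, rfl⟩ := e.symm.surjective q
    exact hd j
  exact key ⟨i, F⟩

/-- regrouping of four coordinates -/
def grp (q : (ℝ × ℝ) × (ℝ × ℝ)) : Fin 4 → ℝ := ![q.1.1, q.2.1, q.1.2, q.2.2]

lemma grp_meas : Measurable grp := by
  refine measurable_pi_lambda _ fun i => ?_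
  fin_cases i
  · exact measurable_fst.comp measurable_fst
  · exact measurable_fst.comp measurable_snd
  · exact measurable_snd.comp measurable_fst
  · exact measurable_snd.comp measurable_snd

lemma grp_map : Measure.pi (fun _ : Fin 4 => nuI) =
    Measure.map grp ((nuI.prod nuI).prod (nuI.prod nuI)) := by
  refine Measure.pi_eq fun s hs => ?_
  rw [Measure.map_apply grp_meas (MeasurableSet.univ_pi hs)]
  have : grp ⁻¹' (Set.univ.pi s) = (s 0 ×ˢ s 2) ×ˢ (s 1 ×ˢ s 3) := by
    ext q
    simp only [grp, Set.mem_preimage, Set.mem_univ_pi, Fin.forall_fin_succ, Set.mem_prod]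
    simp
    tauto
  rw [this, Measure.prod_prod, Measure.prod_prod, Measure.prod_prod, Fin.prod_univ_four]
  ring

/-- A kernel bounded, measurable and symmetric everywhere, with vanishing four-cycle density
vanishes almost everywhere. -/
lemma c4_zero {V : ℝ → ℝ → ℝ} (hm : Measurable (Function.uncurry V))
    (hs : ∀ x y, V x y = V y x) {C : ℝ} (hC : ∀ x y, |V x y| ≤ C)
    (h : ∫ x, V (x 0) (x 1) * V (x 1) (x 2) * V (x 2) (x 3) * V (x 0) (x 3)
      ∂(Measure.pi (fun _ : Fin 4 => nuI)) = 0) :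
    ∀ᵐ q ∂(nuI.prod nuI), V q.1 q.2 = 0 := by
  have hC0 : 0 ≤ C := (abs_nonneg _).trans (hC 0 0)
  have hV : ∀ {α : Type} [MeasurableSpace α] {f g : α → ℝ}, Measurable f → Measurable g →
      Measurable (fun z => V (f z) (g z)) := fun hf hg => hm.comp (hf.prodMk hg)
  -- the square
  set T : ℝ × ℝ → ℝ := fun q => ∫ z, V q.1 z * V q.2 z ∂nuI with hT
  have hTm : StronglyMeasurable T := by
    refine StronglyMeasurable.integral_prod_right' (f := fun r : (ℝ × ℝ) × ℝ => V r.1.1 r.2 * V r.1.2 r.2) ?_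
    refine Measurable.stronglyMeasurable ?_
    exact (hV (by fun_prop) (by fun_prop)).mul (hV (by fun_prop) (by fun_prop))
  have hTb : ∀ q, ‖T q‖ ≤ C * C := by
    intro q
    have := norm_integral_le_of_norm_le_const (μ := nuI) (f := fun z => V q.1 z * V q.2 z)
      (C := C * C) (Filter.Eventually.of_forall fun z => by
        rw [Real.norm_eq_abs, abs_mul]
        exact mul_le_mul (hC _ _) (hC _ _) (abs_nonneg _) hC0)
    simpa using this
  have hT2 : ∫ q, T q * T q ∂(nuI.prod nuI) = 0 := by
    rw [← h, grp_map, integral_map grp_meas.aemeasurable]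
    · have hi : Integrable (fun q : (ℝ × ℝ) × (ℝ × ℝ) =>
          (V q.1.1 q.2.1 * V q.1.2 q.2.1) * (V q.1.1 q.2.2 * V q.1.2 q.2.2))
          ((nuI.prod nuI).prod (nuI.prod nuI)) := by
        refine Integrable.of_bound (C := (C * C) * (C * C)) ?_ ?_
        · refine Measurable.aestronglyMeasurable ?_
          exact ((hV (by fun_prop) (by fun_prop)).mul (hV (by fun_prop) (by fun_prop))).mul
            ((hV (by fun_prop) (by fun_prop)).mul (hV (by fun_prop) (by fun_prop)))
        · refine Filter.Eventually.of_forall fun q => ?_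
          rw [Real.norm_eq_abs, abs_mul, abs_mul, abs_mul]
          have := fun x y => hC x y
          gcongr <;> apply hC
      calc ∫ q, T q * T q ∂(nuI.prod nuI)
          = ∫ q : ℝ × ℝ, ∫ r : ℝ × ℝ, (V q.1 r.1 * V q.2 r.1) * (V q.1 r.2 * V q.2 r.2)
              ∂(nuI.prod nuI) ∂(nuI.prod nuI) := by
            congr 1
            ext q
            exact (integral_prod_mul (fun z => V q.1 z * V q.2 z)
              (fun z => V q.1 z * V q.2 z)).symm
        _ = _ := by
            rw [← integral_prod _ hi]
            congr 1
            ext q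
            simp only [grp]
            simp
            rw [hs q.2.1 q.1.2]
            ring
    · refine Measurable.aestronglyMeasurable ?_
      exact (((hV (by fun_prop) (by fun_prop)).mul (hV (by fun_prop) (by fun_prop))).mul
            (hV (by fun_prop) (by fun_prop))).mul (hV (by fun_prop) (by fun_prop))
  have hT0 : T =ᵐ[nuI.prod nuI] 0 := by
    rw [integral_eq_zero_iff_of_nonneg (fun q => mul_self_nonneg _)] at hT2
    · filter_upwards [hT2] with q hq
      exact mul_self_eq_zero.mp hq
    · refine Integrable.of_bound (C := (C * C) * (C * C))
        (hTm.mul hTm).aestronglyMeasurable (Filter.Eventually.of_forall fun q => ?_)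
      rw [norm_mul]
      exact mul_le_mul (hTb q) (hTb q) (norm_nonneg _) (mul_nonneg hC0 hC0)
  have hVint : Integrable (fun q : ℝ × ℝ => V q.1 q.2) (nuI.prod nuI) :=
    Integrable.of_bound (C := C) hm.aestronglyMeasurable
      (Filter.Eventually.of_forall fun q => hC _ _)
  have hVx : ∀ x, Integrable (fun y => V x y) nuI := fun x =>
    Integrable.of_bound (C := C) (hV measurable_const measurable_id).aestronglyMeasurable
      (Filter.Eventually.of_forall fun q => hC _ _)
  -- integrals over B of V(z, .) vanish for a.e. z
  have hB : ∀ B : Set ℝ, MeasurableSet B → ∀ᵐ z ∂nuI, ∫ x in B, V z x ∂nuI = 0 := by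
    intro B hBm
    set g : ℝ → ℝ := fun z => ∫ x in B, V z x ∂nuI with hg
    have hgm : StronglyMeasurable g :=
      StronglyMeasurable.integral_prod_right' (ν := nuI.restrict B) (f := fun r : ℝ × ℝ => V r.1 r.2)
        hm.stronglyMeasurable
    have hgb : ∀ z, ‖g z‖ ≤ C := by
      intro z
      have := norm_integral_le_of_norm_le_const (μ := nuI.restrict B) (f := fun x => V z x)
        (C := C) (Filter.Eventually.of_forall fun x => hC _ _)
      refine this.trans ?_
      have h1 : (nuI.restrict B).real Set.univ ≤ 1 := by
        rw [measureReal_restrict_apply_univ]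
        exact measureReal_le_one
      nlinarith
    have hgg : ∫ z, g z * g z ∂nuI = 0 := by
      have hi : Integrable (fun q : ℝ × (ℝ × ℝ) => V q.1 q.2.1 * V q.1 q.2.2)
          (nuI.prod ((nuI.restrict B).prod (nuI.restrict B))) := by
        refine Integrable.of_bound (C := C * C) ?_ ?_
        · refine Measurable.aestronglyMeasurable ?_
          exact (hV (by fun_prop) (by fun_prop)).mul (hV (by fun_prop) (by fun_prop))
        · refine Filter.Eventually.of_forall fun q => ?_
          rw [Real.norm_eq_abs, abs_mul]
          exact mul_le_mul (hC _ _) (hC _ _) (abs_nonneg _) hC0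
      calc ∫ z, g z * g z ∂nuI
          = ∫ z, ∫ q : ℝ × ℝ, V z q.1 * V z q.2
              ∂((nuI.restrict B).prod (nuI.restrict B)) ∂nuI := by
            congr 1
            ext z
            exact (integral_prod_mul (fun x => V z x) (fun x => V z x)).symm
        _ = ∫ q : ℝ × ℝ, ∫ z, V z q.1 * V z q.2 ∂nuI
              ∂((nuI.restrict B).prod (nuI.restrict B)) := by
            exact integral_integral_swap hi
        _ = ∫ q : ℝ × ℝ, T q ∂((nuI.restrict B).prod (nuI.restrict B)) := by
            congr 1
            ext q
            simp only [hT]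
            congr 1
            ext z
            rw [hs z, hs z]
        _ = 0 := by
            rw [Measure.prod_restrict]
            exact integral_eq_zero_of_ae (ae_restrict_of_ae hT0)
    rw [integral_eq_zero_iff_of_nonneg (fun q => mul_self_nonneg _)] at hgg
    · filter_upwards [hgg] with q hq
      exact mul_self_eq_zero.mp hq
    · refine Integrable.of_bound (C := C * C)
        (hgm.mul hgm).aestronglyMeasurable (Filter.Eventually.of_forall fun q => ?_)
      rw [norm_mul]
      exact mul_le_mul (hgb q) (hgb q) (norm_nonneg _) hC0
  have hrect : ∀ A B : Set ℝ, MeasurableSet A → MeasurableSet B →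
      ∫ q in A ×ˢ B, V q.1 q.2 ∂(nuI.prod nuI) = 0 := by
    intro A B hA hBm
    rw [setIntegral_prod _ hVint.integrableOn]
    exact integral_eq_zero_of_ae (ae_restrict_of_ae (hB B hBm))
  have hall : ∀ s : Set (ℝ × ℝ), MeasurableSet s →
      ∫ q in s, V q.1 q.2 ∂(nuI.prod nuI) = 0 := by
    intro s hs
    induction s, hs using MeasurableSpace.induction_on_inter generateFrom_prod.symm
      isPiSystem_prod with
    | empty => simp
    | basic t ht =>
      obtain ⟨A, hA, B, hB', rfl⟩ := ht
      exact hrect A B hA hB'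
    | compl t ht ih =>
      have h0 : ∫ q, V q.1 q.2 ∂(nuI.prod nuI) = 0 := by
        have := hrect Set.univ Set.univ MeasurableSet.univ MeasurableSet.univ
        simpa using this
      rw [setIntegral_compl ht hVint, ih, h0, sub_zero]
    | iUnion f hd hf ih =>
      rw [integral_iUnion hf hd hVint.integrableOn]
      simp [ih]
  exact hVint.ae_eq_zero_of_forall_setIntegral_eq_zero (fun s hs _ => hall s hs)

lemma pair_map {n : ℕ} {a b : Fin n} (hab : a ≠ b) :
    Measure.map (fun x : Fin n → ℝ => (x a, x b)) (Measure.pi (fun _ => nuI)) =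
      nuI.prod nuI := by
  have hi := ProbabilityTheory.iIndepFun_pi (μ := fun _ : Fin n => nuI) (X := fun _ x => x)
    (fun _ => aemeasurable_id)
  have h2 := hi.indepFun hab
  rw [ProbabilityTheory.indepFun_iff_map_prod_eq_prod_map_map
    (measurable_pi_apply a).aemeasurable (measurable_pi_apply b).aemeasurable] at h2
  rw [h2]
  have := fun i : Fin n => (measurePreserving_eval (fun _ : Fin n => nuI) i).map_eq
  exact congrArg₂ Measure.prod (this a) (this b)

/-- The four-cycle. -/
lemma exists_c4 : ∃ G : SimpleGraph (Fin 4), edg G = {(0, 1), (1, 2), (2, 3), (0, 3)} := by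
  refine exists_graph ⊤ _ ?_
  intro p hp
  simp only [Finset.mem_insert, Finset.mem_singleton] at hp
  simp only [edg, Finset.mem_filter, Finset.mem_univ, true_and, SimpleGraph.top_adj]
  rcases hp with rfl | rfl | rfl | rfl <;> decide

lemma const_ae {U : ℝ → ℝ → ℝ} {c : ℝ} (hU : memW U)
    (h : ∀ F : SimpleGraph (Fin 4), homDensity F U = homDensity F (fun _ _ => c)) :
    ∀ᵐ q ∂(nuI.prod nuI), U q.1 q.2 = c := by
  obtain ⟨G, hG⟩ := exists_c4
  have hc : memW (fun _ _ => c) := ⟨measurable_const, fun _ _ _ _ => rfl, |c|, fun _ _ _ _ => le_rfl⟩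
  have h0 := homDensity_affine_congr hU hc 1 (-c) h G
  obtain ⟨hm, hs, C, hC⟩ := memW_affine hU 1 (-c)
  have hIm : MeasurableSet (I01 ×ˢ I01) := measurableSet_Icc.prod measurableSet_Icc
  have hin : ∀ᵐ q ∂(nuI.prod nuI), q ∈ I01 ×ˢ I01 := by
    rw [nuI, Measure.prod_restrict]
    exact ae_restrict_mem hIm
  set V : ℝ → ℝ → ℝ := fun x y => (I01 ×ˢ I01).indicator (fun q => 1 * U q.1 q.2 + -c) (x, y)
    with hVdef
  have hVin : ∀ x ∈ I01, ∀ y ∈ I01, V x y = 1 * U x y + -c := by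
    intro x hx y hy
    exact Set.indicator_of_mem (show (x, y) ∈ I01 ×ˢ I01 from ⟨hx, hy⟩) _
  have hVout : ∀ x y, ¬ (x ∈ I01 ∧ y ∈ I01) → V x y = 0 := by
    intro x y hxy
    exact Set.indicator_of_notMem (show (x, y) ∉ I01 ×ˢ I01 from hxy) _
  have hC0 : 0 ≤ C := (abs_nonneg _).trans
    (hC 0 (by simp [I01]) 0 (by simp [I01]))
  have key := c4_zero (V := V) (C := C) ?_ ?_ ?_ ?_
  · filter_upwards [key, hin] with q hq hq2
    rw [hVin _ hq2.1 _ hq2.2] at hq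
    linarith
  · exact hm.indicator hIm
  · intro x y
    by_cases hxy : x ∈ I01 ∧ y ∈ I01
    · rw [hVin x hxy.1 y hxy.2, hVin y hxy.2 x hxy.1]
      exact hs x hxy.1 y hxy.2
    · rw [hVout x y hxy, hVout y x (by tauto)]
  · intro x y
    by_cases hxy : x ∈ I01 ∧ y ∈ I01
    · rw [hVin x hxy.1 y hxy.2]
      exact hC x hxy.1 y hxy.2
    · rw [hVout x y hxy]
      simpa using hC0
  · have e1 : homDensity G (fun _ _ => 1 * c + -c) = 0 := by
      rw [homDensity_eq, hG]
      simp
    rw [e1, homDensity_eq, hG] at h0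
    rw [← cube_measure, ← h0]
    refine setIntegral_congr_fun (cube_meas 4) fun x hx => ?_
    have hx' : ∀ i, x i ∈ I01 := fun i => hx i trivial
    rw [hVin _ (hx' _) _ (hx' _), hVin _ (hx' _) _ (hx' _), hVin _ (hx' _) _ (hx' _),
      hVin _ (hx' _) _ (hx' _)]
    rw [Finset.prod_insert (by decide), Finset.prod_insert (by decide),
      Finset.prod_insert (by decide), Finset.prod_singleton]
    ring

lemma const_forcible (c : ℝ) : FinitelyForcible memW (fun _ _ => c) := by
  have hc : memW (fun _ _ => c) := ⟨measurable_const, fun _ _ _ _ => rfl, |c|, fun _ _ _ _ => le_rfl⟩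
  refine forcible_of_all hc 1 (fun _ => 4) fun U hU h n F => ?_
  have hae := const_ae hU (h 0)
  rw [homDensity_eq, homDensity_eq, cube_measure]
  refine integral_congr_ae ?_
  have : ∀ᵐ x ∂(Measure.pi (fun _ : Fin n => nuI)), ∀ p ∈ edg F, U (x p.1) (x p.2) = c := by
    rw [Finset.eventually_all]
    intro p hp
    simp only [edg, Finset.mem_filter] at hp
    rw [← pair_map hp.2.1.ne] at hae
    exact ae_of_ae_map ((measurable_pi_apply p.1).prodMk (measurable_pi_apply p.2)).aemeasurable hae
  filter_upwards [this] with x hx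
  exact Finset.prod_congr rfl hx

/-- if `W ∈ 𝒲` is finitely forcible in `𝒲`, then so is `λW + μ`. -/
theorem statement2 (W : ℝ → ℝ → ℝ) (h : FinitelyForcible memW W) (lam mu : ℝ) :
    FinitelyForcible memW (fun x y => lam * W x y + mu) := by
  by_cases hl : lam = 0
  · subst hl
    simpa using const_forcible mu
  obtain ⟨hW, k, n, F, hF⟩ := h
  have hW' := memW_affine hW lam mu
  refine forcible_of_all hW' k n fun U hU hd => ?_
  have hV := memW_affine hU lam⁻¹ (-(lam⁻¹ * mu))
  have hWW : (fun x y => lam⁻¹ * (lam * W x y + mu) + -(lam⁻¹ * mu)) = W := by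
    ext x y
    field_simp
    ring
  have hUU : (fun x y => lam * (lam⁻¹ * U x y + -(lam⁻¹ * mu)) + mu) = U := by
    ext x y
    field_simp
    ring
  have hwi := hF _ hV fun i => by
    have := homDensity_affine_congr hU hW' lam⁻¹ (-(lam⁻¹ * mu)) (hd i) (F i)
    rw [this]
    exact congrArg _ hWW
  intro m G
  have := homDensity_affine_congr hV hW lam mu (hwi m) G
  rw [← this]
  exact congrArg _ hUU.symm
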